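/- arXiv:1305.7473 — 2 statements merged into one kernel-verified Lean document; each statement's English description precedes it below -/
import Mathlib

section
/- For every finite simple graph G, the maximum over all orientations G⃗ of G of the fractional directed local chromatic number ψ_d*(G⃗) equals the fractional chromatic number χ*(G). -/
open Classical

/-- The underlying undirected simple graph of a digraph given by an arc relation `D`. -/
def underlying {V : Type*} (D : V → V → Prop) : SimpleGraph V := SimpleGraph.fromRel D

/-- `A` is an independent set of the simple graph `G`. -/
def IsIndepF {V : Type*} (G : SimpleGraph V) (A : Finset V) : Prop :=
  ∀ u ∈ A, ∀ v ∈ A, ¬ G.Adj u v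

/-- A fractional coloring of `G`: nonnegative weights on the independent sets of `G` such
that the sets containing any fixed vertex have total weight at least `1`. -/
structure FracColoring {V : Type*} [Fintype V] (G : SimpleGraph V) where
  x : Finset V → ℝ
  nonneg : ∀ A, 0 ≤ x A
  supp : ∀ A, x A ≠ 0 → IsIndepF G A
  cover : ∀ v : V, 1 ≤ ∑ A : Finset V, if v ∈ A then x A else 0

/-- The total weight of a fractional coloring. -/
noncomputable def totalWeight {V : Type*} [Fintype V] {G : SimpleGraph V}
    (f : FracColoring G) : ℝ :=
  ∑ A : Finset V, f.x A

/-- The fractional chromatic number `χ*(G)`: the minimum total weight of a fractional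
coloring of `G`. -/
noncomputable def fracChrom {V : Type*} [Fintype V] (G : SimpleGraph V) : ℝ :=
  sInf {w : ℝ | ∃ f : FracColoring G, w = totalWeight f}

/-- The local weight of a fractional coloring of a digraph `D`:
`1` plus the maximum over vertices `v` of the total weight of the independent sets meeting
the out-neighborhood of `v`. -/
noncomputable def localWeight {V : Type*} [Fintype V] (D : V → V → Prop)
    (f : FracColoring (underlying D)) : ℝ :=
  1 + ⨆ v : V, ∑ A : Finset V, if ∃ u ∈ A, D v u then f.x A else 0

/-- The fractional directed local chromatic number `ψ_d*(D)`: the minimum local weight of a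
fractional coloring of `D`. -/
noncomputable def fracDirLocal {V : Type*} [Fintype V] (D : V → V → Prop) : ℝ :=
  sInf {w : ℝ | ∃ f : FracColoring (underlying D), w = localWeight D f}

/-- `D` is an orientation of the simple graph `G`: every arc of `D` lies on an edge of `G`,
and every edge of `G` carries exactly one of its two possible orientations as an arc. -/
def IsOrientation {V : Type*} (G : SimpleGraph V) (D : V → V → Prop) : Prop :=
  (∀ u v, D u v → G.Adj u v) ∧ (∀ u v, G.Adj u v → (D u v ↔ ¬ D v u))


lemma underlying_eq {V : Type} {G : SimpleGraph V} {D : V → V → Prop}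
    (h : IsOrientation G D) : underlying D = G := by
  ext u v
  simp only [underlying, SimpleGraph.fromRel_adj]
  constructor
  · rintro ⟨_, h1 | h1⟩
    · exact h.1 _ _ h1
    · exact (h.1 _ _ h1).symm
  · intro h1
    refine ⟨h1.ne, ?_⟩
    have := h.2 u v h1
    tauto

lemma exists_coloring {V : Type} [Fintype V] (G : SimpleGraph V) :
    Nonempty (FracColoring G) := by
  refine ⟨⟨fun A => if A.card = 1 then 1 else 0, ?_, ?_, ?_⟩⟩
  · intro A
    split_ifs <;> norm_num
  · intro A hA
    have h1 : A.card = 1 := by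
      by_contra h
      simp [h] at hA
    obtain ⟨a, rfl⟩ := Finset.card_eq_one.1 h1
    intro u hu v hv
    simp only [Finset.mem_singleton] at hu hv
    subst hu hv
    exact G.loopless.irrefl _
  · intro v
    have := Finset.single_le_sum (s := Finset.univ)
      (f := fun A : Finset V => if v ∈ A then (if A.card = 1 then (1:ℝ) else 0) else 0)
      (fun A _ => by split_ifs <;> norm_num) (Finset.mem_univ {v})
    simpa using this

lemma one_le_total {V : Type} [Fintype V] [Nonempty V] {G : SimpleGraph V}
    (f : FracColoring G) : 1 ≤ totalWeight f := by
  obtain ⟨v⟩ := ‹Nonempty V›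
  refine (f.cover v).trans (Finset.sum_le_sum fun A _ => ?_)
  have := f.nonneg A
  split_ifs <;> linarith

lemma fracChrom_le {V : Type} [Fintype V] [Nonempty V] {G : SimpleGraph V}
    (f : FracColoring G) : fracChrom G ≤ totalWeight f := by
  refine csInf_le ⟨1, ?_⟩ ⟨f, rfl⟩
  rintro _ ⟨g, rfl⟩
  exact one_le_total g

lemma one_le_fracChrom {V : Type} [Fintype V] [Nonempty V] (G : SimpleGraph V) :
    1 ≤ fracChrom G := by
  obtain ⟨f⟩ := exists_coloring G
  refine le_csInf ⟨_, f, rfl⟩ ?_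
  rintro _ ⟨g, rfl⟩
  exact one_le_total g

/-- The upper bound: every orientation has local number at most the fractional chromatic number. -/
lemma dirLocal_le {V : Type} [Fintype V] [Nonempty V] {G : SimpleGraph V} {D : V → V → Prop}
    (h : IsOrientation G D) : fracDirLocal D ≤ fracChrom G := by
  have hG := underlying_eq h
  subst hG
  obtain ⟨f0⟩ := exists_coloring (underlying D)
  refine le_csInf ⟨_, f0, rfl⟩ ?_
  rintro _ ⟨f, rfl⟩
  have hb : localWeight D f ≤ totalWeight f := by
    unfold localWeight
    suffices (⨆ v : V, ∑ A : Finset V, if ∃ u ∈ A, D v u then f.x A else 0)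
        ≤ totalWeight f - 1 by linarith
    refine ciSup_le fun v => ?_
    have hc := f.cover v
    have : (∑ A : Finset V, if ∃ u ∈ A, D v u then f.x A else 0)
        + (∑ A : Finset V, if v ∈ A then f.x A else 0) ≤ totalWeight f := by
      rw [← Finset.sum_add_distrib]
      refine Finset.sum_le_sum fun A _ => ?_
      have hn := f.nonneg A
      by_cases h1 : ∃ u ∈ A, D v u
      · by_cases h2 : v ∈ A
        · obtain ⟨u, hu, hD⟩ := h1
          have : f.x A = 0 := by
            by_contra h3
            exact f.supp A h3 v h2 u hu (h.1 _ _ hD)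
          simp [this]
        · simp [h1, h2]
      · rw [if_neg h1]
        split_ifs <;> linarith
    linarith
  refine le_trans (csInf_le ⟨1, ?_⟩ ⟨f, rfl⟩) hb
  rintro _ ⟨g, rfl⟩
  have : 0 ≤ (⨆ v : V, ∑ A : Finset V, if ∃ u ∈ A, D v u then g.x A else 0) := by
    refine Real.iSup_nonneg fun v => Finset.sum_nonneg fun A _ => ?_
    have := g.nonneg A
    split_ifs <;> linarith
  unfold localWeight
  linarith

/-- Linear programming duality for the fractional chromatic number. -/
lemma exists_dual {V : Type} [Fintype V] [Nonempty V] (G : SimpleGraph V) :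
    ∃ (w : V → ℝ) (A₀ : Finset V), (∀ v, 0 ≤ w v) ∧ IsIndepF G A₀ ∧
      (∀ A, IsIndepF G A → ∑ v ∈ A, w v ≤ ∑ v ∈ A₀, w v) ∧
      0 < ∑ v ∈ A₀, w v ∧
      fracChrom G * ∑ v ∈ A₀, w v ≤ ∑ v, w v := by
  set c := fracChrom G with hc
  have hc1 : 1 ≤ c := one_le_fracChrom G
  have hc0 : 0 < c := by linarith
  let U : Set (V → ℝ) := Set.univ.pi fun _ => Set.Ioi (1 / c)
  let K : Set (V → ℝ) := {y | ∃ x : Finset V → ℝ, (∀ A, 0 ≤ x A) ∧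
    (∀ A, x A ≠ 0 → IsIndepF G A) ∧ ∑ A, x A = 1 ∧
    y = fun v => ∑ A : Finset V, if v ∈ A then x A else 0}
  have hU : Convex ℝ U := convex_pi fun _ _ => convex_Ioi _
  have hUo : IsOpen U := isOpen_set_pi Set.finite_univ fun _ _ => isOpen_Ioi
  have hK : Convex ℝ K := by
    rintro _ ⟨x, hx0, hxs, hx1, rfl⟩ _ ⟨y, hy0, hys, hy1, rfl⟩ a b ha hb hab
    refine ⟨fun A => a * x A + b * y A, ?_, ?_, ?_, ?_⟩
    · intro A
      have := hx0 A
      have := hy0 A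
      positivity
    · intro A hA
      by_cases h : x A = 0
      · refine hys A fun h' => hA ?_
        simp [h, h']
      · exact hxs A h
    · rw [Finset.sum_add_distrib, ← Finset.mul_sum, ← Finset.mul_sum, hx1, hy1]
      linarith
    · funext v
      simp only [Pi.add_apply, Pi.smul_apply, smul_eq_mul, Finset.mul_sum]
      rw [← Finset.sum_add_distrib]
      refine Finset.sum_congr rfl fun A _ => ?_
      split_ifs <;> simp
  have hdisj : Disjoint U K := by
    rw [Set.disjoint_left]
    rintro _ hyU ⟨x, hx0, hxs, hx1, rfl⟩
    obtain ⟨v₀, hv₀⟩ := Finite.exists_min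
      (fun v : V => ∑ A : Finset V, if v ∈ A then x A else 0)
    set m := ∑ A : Finset V, if v₀ ∈ A then x A else 0 with hm
    have hmc : 1 / c < m := hyU v₀ trivial
    have hm0 : 0 < m := lt_trans (by positivity) hmc
    let f : FracColoring G := ⟨fun A => x A / m, fun A => div_nonneg (hx0 A) hm0.le,
      fun A hA => hxs A (fun h => hA (by simp [h])), fun v => by
        have h1 : (∑ A : Finset V, if v ∈ A then x A / m else 0)
            = (∑ A : Finset V, if v ∈ A then x A else 0) / m := by
          rw [Finset.sum_div]
          refine Finset.sum_congr rfl fun A _ => ?_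
          split_ifs <;> simp
        rw [h1, le_div_iff₀ hm0, one_mul]
        exact hv₀ v⟩
    have hf : totalWeight f = 1 / m := by
      simp only [totalWeight, f]
      rw [← Finset.sum_div, hx1]
    have h2 : c ≤ 1 / m := hf ▸ fracChrom_le f
    rw [le_div_iff₀ hm0] at h2
    rw [div_lt_iff₀ hc0] at hmc
    linarith
  obtain ⟨φ, u, hφU, hφK⟩ := geometric_hahn_banach_open hU hUo hK hdisj
  let w : V → ℝ := fun v => - φ (Pi.single v 1)
  have hφ : ∀ y : V → ℝ, φ y = - ∑ v, y v * w v := by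
    intro y
    conv_lhs => rw [pi_eq_sum_univ' y]
    rw [map_sum, ← Finset.sum_neg_distrib]
    refine Finset.sum_congr rfl fun v _ => ?_
    rw [map_smul]
    simp only [w, smul_eq_mul, mul_neg, neg_neg]
  have hA : ∀ A, IsIndepF G A → ∑ v ∈ A, w v ≤ -u := by
    intro A hAi
    have hmem : (fun v => if v ∈ A then (1:ℝ) else 0) ∈ K := by
      refine ⟨fun B => if B = A then 1 else 0, ?_, ?_, ?_, ?_⟩
      · intro B
        dsimp only
        split_ifs <;> norm_num
      · intro B hB
        have : B = A := by
          by_contra h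
          simp [h] at hB
        rwa [this]
      · simp
      · funext v
        rw [Finset.sum_eq_single A]
        · simp
        · intro B _ hB
          simp [hB]
        · simp
    have := hφK _ hmem
    rw [hφ] at this
    simp only [ite_mul, one_mul, zero_mul, Finset.sum_ite_mem, Finset.univ_inter] at this
    linarith
  have hs0 : 0 ≤ -u := by
    have := hA ∅ (by intro u hu; simp at hu)
    simpa using this
  have hconst : ∀ r : ℝ, 1 / c < r → -u < r * ∑ v, w v := by
    intro r hr
    have := hφU (fun _ => r) (fun _ _ => hr)
    rw [hφ, ← Finset.mul_sum] at this
    linarith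
  have hw : ∀ v, 0 ≤ w v := by
    intro v
    by_contra hneg
    push Not at hneg
    have key : ∀ n : ℝ, 0 ≤ n → -u < (1 / c + 1) * ∑ v, w v + n * w v := by
      intro n hn
      have := hφU ((fun _ => 1 / c + 1) + n • Pi.single v 1) (fun j _ => by
        have : 0 ≤ (Pi.single v (1:ℝ) : V → ℝ) j := by
          rw [Pi.single_apply]; split_ifs <;> norm_num
        have := mul_nonneg hn this
        simp only [Set.mem_Ioi, Pi.add_apply, Pi.smul_apply, smul_eq_mul]
        linarith)
      rw [map_add, map_smul, hφ, ← Finset.mul_sum] at this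
      simp only [smul_eq_mul] at this
      simp only [w] at this ⊢
      linarith
    have h0 := key 0 le_rfl
    have h1 := key (((1 / c + 1) * ∑ v, w v + u) / (- w v))
      (div_nonneg (by linarith) (by linarith))
    have h2 : ((1 / c + 1) * ∑ v, w v + u) / (- w v) * w v
      = -((1 / c + 1) * ∑ v, w v + u) := by
      rw [div_neg, neg_mul, div_mul_cancel₀ _ hneg.ne]
    rw [h2] at h1
    linarith
  have hW : 0 < ∑ v, w v := by
    have h := hconst (1 / c + 1) (by linarith)
    have hp : 0 < 1 / c + 1 := by positivity
    by_contra h'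
    push Not at h'
    have := mul_nonpos_of_nonneg_of_nonpos hp.le h'
    linarith
  have hlim : -u ≤ (1 / c) * ∑ v, w v := by
    by_contra h'
    push Not at h'
    rw [← lt_div_iff₀ hW] at h'
    have := hconst _ h'
    rw [div_mul_cancel₀ _ hW.ne'] at this
    linarith
  obtain ⟨A₀, hA₀, hmax⟩ := Finset.exists_max_image
    (Finset.univ.filter fun A : Finset V => IsIndepF G A) (fun A => ∑ v ∈ A, w v)
    ⟨∅, Finset.mem_filter.2 ⟨Finset.mem_univ _, fun a ha => by simp at ha⟩⟩
  simp only [Finset.mem_filter, Finset.mem_univ, true_and] at hA₀ hmax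
  refine ⟨w, A₀, hw, hA₀, hmax, ?_, ?_⟩
  · obtain ⟨v, _, hv⟩ := Finset.exists_lt_of_sum_lt (s := Finset.univ) (f := fun _ : V => (0:ℝ))
      (g := w) (by simpa using hW)
    have := hmax {v} (by
      intro a ha b hb
      simp only [Finset.mem_singleton] at ha hb
      subst ha hb
      exact G.loopless.irrefl _)
    rw [Finset.sum_singleton] at this
    linarith
  · have h1 := (hA A₀ hA₀).trans hlim
    rw [one_div, inv_mul_eq_div, le_div_iff₀ hc0] at h1
    linarith

lemma exists_orientation {V : Type} (G : SimpleGraph V) (A₀ : Finset V)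
    (hA : IsIndepF G A₀) :
    ∃ D : V → V → Prop, IsOrientation G D ∧ ∀ v ∈ A₀, ∀ u, G.Adj v u → D v u := by
  refine ⟨fun u v => G.Adj u v ∧ (u ∈ A₀ ∨ (v ∉ A₀ ∧ WellOrderingRel u v)),
    ⟨fun u v h => h.1, fun u v h => ?_⟩, fun v hv u h => ⟨h, Or.inl hv⟩⟩
  have h1 := hA u
  have h2 := h.symm
  have h3 : WellOrderingRel u v → ¬ WellOrderingRel v u := fun a b => asymm a b
  have h4 : WellOrderingRel u v ∨ u = v ∨ WellOrderingRel v u := trichotomous u v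
  have h5 := h.ne
  have h6 : u ∈ A₀ → v ∉ A₀ := fun a b => h1 a v b h
  tauto

lemma chrom_le_local {V : Type} [Fintype V] [Nonempty V] {D : V → V → Prop}
    (w : V → ℝ) (A₀ : Finset V) (hw : ∀ v, 0 ≤ w v) (hA₀ : IsIndepF (underlying D) A₀)
    (hmax : ∀ A, IsIndepF (underlying D) A → ∑ v ∈ A, w v ≤ ∑ v ∈ A₀, w v)
    (hpos : 0 < ∑ v ∈ A₀, w v) (c : ℝ)
    (hc : c * ∑ v ∈ A₀, w v ≤ ∑ v, w v)
    (hD : ∀ v ∈ A₀, ∀ u, (underlying D).Adj v u → D v u)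
    (f : FracColoring (underlying D)) : c ≤ localWeight D f := by
  unfold localWeight
  set t := ⨆ v : V, ∑ A : Finset V, if ∃ u ∈ A, D v u then f.x A else 0 with ht
  have htv : ∀ v, (∑ A : Finset V, if ∃ u ∈ A, D v u then f.x A else 0) ≤ t := fun v =>
    le_ciSup (f := fun v => ∑ A : Finset V, if ∃ u ∈ A, D v u then f.x A else 0)
      (Set.finite_range _).bddAbove v
  -- for each independent set, exchange
  have hex : ∀ A, IsIndepF (underlying D) A →
      ∑ v ∈ A \ A₀, w v ≤ ∑ v ∈ A₀ with ∃ u ∈ A, D v u, w v := by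
    intro A hAi
    let B := A₀.filter fun v => ¬ ∃ u ∈ A, D v u
    have hno : ∀ b ∈ B, ∀ a ∈ A, ¬ (underlying D).Adj b a := by
      intro b hb a ha hab
      simp only [B, Finset.mem_filter] at hb
      exact hb.2 ⟨a, ha, hD b hb.1 a hab⟩
    have hind : IsIndepF (underlying D) ((A \ A₀) ∪ B) := by
      intro a ha b hb hab
      rw [Finset.mem_union] at ha hb
      rcases ha with ha | ha <;> rcases hb with hb | hb
      · exact hAi a (Finset.mem_sdiff.1 ha).1 b (Finset.mem_sdiff.1 hb).1 hab
      · exact hno b hb a (Finset.mem_sdiff.1 ha).1 hab.symm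
      · exact hno a ha b (Finset.mem_sdiff.1 hb).1 hab
      · exact hA₀ a (Finset.mem_filter.1 ha).1 b (Finset.mem_filter.1 hb).1 hab
    have h1 := hmax _ hind
    rw [Finset.sum_union (Finset.disjoint_left.2 fun a ha hb =>
      (Finset.mem_sdiff.1 ha).2 (Finset.mem_filter.1 hb).1)] at h1
    have h2 := Finset.sum_filter_add_sum_filter_not A₀ (fun v => ∃ u ∈ A, D v u) w
    simp only [B] at h1
    linarith
  have h1 : ∑ v ∈ Finset.univ \ A₀, w v ≤ ∑ A : Finset V, f.x A * ∑ v ∈ A \ A₀, w v := by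
    calc ∑ v ∈ Finset.univ \ A₀, w v
        ≤ ∑ v ∈ Finset.univ \ A₀, w v * ∑ A : Finset V, if v ∈ A then f.x A else 0 :=
          Finset.sum_le_sum fun v _ => le_mul_of_one_le_right (hw v) (f.cover v)
      _ = ∑ A : Finset V, f.x A * ∑ v ∈ A \ A₀, w v := by
          simp only [Finset.mul_sum]
          rw [Finset.sum_comm]
          refine Finset.sum_congr rfl fun A _ => ?_
          have : A \ A₀ = (Finset.univ \ A₀).filter (fun v => v ∈ A) := by
            ext v; simp [and_comm]
          rw [this, Finset.sum_filter]
          refine Finset.sum_congr rfl fun v _ => ?_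
          split_ifs <;> ring
  have h2 : ∑ A : Finset V, f.x A * ∑ v ∈ A \ A₀, w v ≤
      ∑ A : Finset V, f.x A * ∑ v ∈ A₀ with ∃ u ∈ A, D v u, w v := by
    refine Finset.sum_le_sum fun A _ => ?_
    by_cases h : f.x A = 0
    · simp [h]
    · exact mul_le_mul_of_nonneg_left (hex A (f.supp A h)) (f.nonneg A)
  have h3 : ∑ A : Finset V, f.x A * ∑ v ∈ A₀ with ∃ u ∈ A, D v u, w v
      = ∑ v ∈ A₀, w v * ∑ A : Finset V, if ∃ u ∈ A, D v u then f.x A else 0 := by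
    simp only [Finset.mul_sum]
    rw [Finset.sum_comm (s := A₀)]
    refine Finset.sum_congr rfl fun A _ => ?_
    rw [Finset.sum_filter]
    refine Finset.sum_congr rfl fun v _ => ?_
    split_ifs <;> ring
  have h4 : ∑ v ∈ A₀, w v * ∑ A : Finset V, (if ∃ u ∈ A, D v u then f.x A else 0)
      ≤ (∑ v ∈ A₀, w v) * t := by
    rw [Finset.sum_mul]
    exact Finset.sum_le_sum fun v _ => mul_le_mul_of_nonneg_left (htv v) (hw v)
  have h5 := Finset.sum_sdiff (f := w) (Finset.subset_univ A₀)
  have h6 : c * ∑ v ∈ A₀, w v ≤ (1 + t) * ∑ v ∈ A₀, w v := by linarith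
  exact le_of_mul_le_mul_right h6 hpos

/-- For every finite simple graph `G`, the maximum of `ψ_d*(D)` over all orientations `D` of
`G` equals (and is attained at) the fractional chromatic number `χ*(G)`. -/
theorem stmt4 {V : Type} [Fintype V] [Nonempty V] (G : SimpleGraph V) :
    IsGreatest {w : ℝ | ∃ D : V → V → Prop, IsOrientation G D ∧ w = fracDirLocal D}
      (fracChrom G) := by
  constructor
  · obtain ⟨w, A₀, hw, hA₀, hmax, hpos, hc⟩ := exists_dual G
    obtain ⟨D, hO, hD⟩ := exists_orientation G A₀ hA₀
    refine ⟨D, hO, le_antisymm ?_ (dirLocal_le hO)⟩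
    have hG := underlying_eq hO
    subst hG
    obtain ⟨f0⟩ := exists_coloring (underlying D)
    refine le_csInf ⟨_, f0, rfl⟩ ?_
    rintro _ ⟨f, rfl⟩
    exact chrom_le_local w A₀ hw hA₀ hmax hpos _ hc hD f
  · rintro _ ⟨D, hO, rfl⟩
    exact dirLocal_le hO
end

section
/- The supremum, over all finite loopless directed graphs G with at least one arc, of the ratio χ*(G)/ψ_d*(G) equals e, the base of the natural logarithm: for every such G one has χ*(G) < e·ψ_d*(G), and for every ε > 0 there exists such a G with χ*(G) > (e−ε)·ψ_d*(G). -/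
open Classical

section Helpers

open Finset

lemma fc_lower {V : Type*} [Fintype V] (G : SimpleGraph V) (a : ℝ)
    (ha : ∀ A : Finset V, IsIndepF G A → (A.card : ℝ) ≤ a) (f : FracColoring G) :
    (Fintype.card V : ℝ) ≤ a * totalWeight f := by
  have h1 : (Fintype.card V : ℝ) ≤ ∑ v : V, ∑ A : Finset V, if v ∈ A then f.x A else 0 := by
    calc (Fintype.card V : ℝ) = ∑ v : V, (1 : ℝ) := by simp
      _ ≤ _ := Finset.sum_le_sum fun v _ => f.cover v
  rw [Finset.sum_comm] at h1
  refine h1.trans ?_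
  rw [totalWeight, Finset.mul_sum]
  refine Finset.sum_le_sum fun A _ => ?_
  rw [← Finset.sum_filter, Finset.sum_const, nsmul_eq_mul]
  have : (univ.filter fun v => v ∈ A) = A := by ext; simp
  rw [this]
  by_cases h : f.x A = 0
  · simp [h]
  · exact mul_le_mul_of_nonneg_right (ha A (f.supp A h)) (f.nonneg A)

/-- Coloring from a proper vertex coloring. -/
noncomputable def colF {V K : Type*} [Fintype V] [Fintype K] (G : SimpleGraph V) (c : V → K)
    (hc : ∀ u v, G.Adj u v → c u ≠ c v) : FracColoring G where
  x A := ∑ k : K, if A = univ.filter (fun v => c v = k) then 1 else 0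
  nonneg A := Finset.sum_nonneg fun k _ => by split_ifs <;> norm_num
  supp A hA := by
    obtain ⟨k, -, hk⟩ := Finset.exists_ne_zero_of_sum_ne_zero hA
    have hk' : A = univ.filter (fun v => c v = k) := by
      by_contra h
      simp [h] at hk
    intro u hu v hv huv
    rw [hk'] at hu hv
    simp at hu hv
    exact hc u v huv (hu.trans hv.symm)
  cover v := by
    have : (∑ A : Finset V, if v ∈ A then
        (∑ k : K, if A = univ.filter (fun v => c v = k) then (1:ℝ) else 0) else 0)
        = ∑ k : K, if v ∈ univ.filter (fun v => c v = k) then (1:ℝ) else 0 := by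
      simp only [← Finset.sum_filter]
      rw [Finset.sum_comm' (t' := univ) (s' := fun k => univ.filter (fun A => v ∈ A ∧
        A = univ.filter (fun v => c v = k)))]
      · rw [Finset.sum_filter]
        refine Finset.sum_congr rfl fun k _ => ?_
        by_cases h : c v = k
        · have : (univ.filter (fun A => v ∈ A ∧ A = univ.filter (fun v => c v = k)))
             = {univ.filter (fun v => c v = k)} := by
            ext A
            simp only [mem_filter, mem_univ, true_and, mem_singleton]
            constructor
            · exact fun h => h.2
            · rintro rfl
              simp [h]
          rw [this]; simp [h]
        · have : (univ.filter (fun A => v ∈ A ∧ A = univ.filter (fun v => c v = k)))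
             = ∅ := by
            ext A
            simp only [mem_filter, mem_univ, true_and, notMem_empty, iff_false]
            rintro ⟨h1, rfl⟩
            simp [h] at h1
          rw [this]; simp [h]
      · intro A k; simp
    rw [this]
    simp

lemma colF_local {V K : Type*} [Fintype V] [Fintype K] (G : SimpleGraph V) (c : V → K)
    (hc : ∀ u v, G.Adj u v → c u ≠ c v) (P : V → Prop) :
    (∑ A : Finset V, if ∃ u ∈ A, P u then (colF G c hc).x A else 0)
      = ((univ.filter fun k => ∃ u, c u = k ∧ P u).card : ℝ) := by
  have h1 : ∀ A : Finset V, (if ∃ u ∈ A, P u then (colF G c hc).x A else 0)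
      = ∑ k : K, if A = univ.filter (fun v => c v = k) then
          (if ∃ u, c u = k ∧ P u then (1:ℝ) else 0) else 0 := by
    intro A
    simp only [colF]
    by_cases h : ∃ u ∈ A, P u
    · rw [if_pos h]
      refine Finset.sum_congr rfl fun k _ => ?_
      by_cases hA : A = univ.filter (fun v => c v = k)
      · subst hA
        simp only [mem_filter, mem_univ, true_and] at h
        simp [h]
      · simp [hA]
    · rw [if_neg h]
      symm
      refine Finset.sum_eq_zero fun k _ => ?_
      by_cases hA : A = univ.filter (fun v => c v = k)
      · subst hA
        simp only [mem_filter, mem_univ, true_and] at h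
        simp only [if_true, if_neg h]
      · simp [hA]
  simp only [h1]
  rw [Finset.sum_comm]
  simp

lemma local_le {V : Type*} [Fintype V] (D : V → V → Prop) (f : FracColoring (underlying D))
    (v : V) : (∑ A : Finset V, if ∃ u ∈ A, D v u then f.x A else 0) ≤ localWeight D f - 1 := by
  have := le_ciSup (f := fun v : V => ∑ A : Finset V, if ∃ u ∈ A, D v u then f.x A else 0)
    (Set.finite_range _).bddAbove v
  simp only [localWeight]
  linarith

lemma one_le_local {V : Type*} [Fintype V] (D : V → V → Prop)
    (f : FracColoring (underlying D)) : 1 ≤ localWeight D f := by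
  have : 0 ≤ ⨆ v : V, ∑ A : Finset V, if ∃ u ∈ A, D v u then f.x A else 0 :=
    Real.iSup_nonneg fun v => Finset.sum_nonneg fun A _ => by
      split_ifs
      · exact f.nonneg A
      · exact le_rfl
  simp only [localWeight]
  linarith

noncomputable def trivF {V : Type*} [Fintype V] (G : SimpleGraph V) : FracColoring G :=
  colF G id (fun _ _ h => h.ne)

lemma one_le_fdl {V : Type*} [Fintype V] (D : V → V → Prop) : 1 ≤ fracDirLocal D := by
  refine le_csInf ⟨_, trivF _, rfl⟩ ?_
  rintro w ⟨f, rfl⟩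
  exact one_le_local D f

lemma fdl_le {V : Type*} [Fintype V] (D : V → V → Prop) (f : FracColoring (underlying D)) :
    fracDirLocal D ≤ localWeight D f := by
  refine csInf_le ⟨1, ?_⟩ ⟨f, rfl⟩
  rintro w ⟨f, rfl⟩
  exact one_le_local D f

lemma fc_le {V : Type*} [Fintype V] (G : SimpleGraph V) (f : FracColoring G) :
    fracChrom G ≤ totalWeight f := by
  refine csInf_le ⟨0, ?_⟩ ⟨f, rfl⟩
  rintro w ⟨f, rfl⟩
  exact Finset.sum_nonneg fun A _ => f.nonneg A

lemma amgm (k : ℕ) (hk : 1 ≤ k) (s b : ℝ) (hs : 0 ≤ s) (hb : 0 ≤ b) :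
    s * b ^ k * (k + 1) ^ (k + 1) ≤ (s + b) ^ (k + 1) * k ^ k := by
  rcases hb.eq_or_lt with rfl | hb
  · rw [zero_pow (by omega)]
    simp
    positivity
  have hk0 : (0:ℝ) < k := by exact_mod_cast hk
  set y : ℝ := (s + b) * k / ((k + 1) * b) with hy
  have hy0 : 0 ≤ y := by positivity
  have hB := one_add_mul_le_pow (a := y - 1) (by linarith) (k + 1)
  have e1 : 1 + ((k + 1 : ℕ) : ℝ) * (y - 1) = k * s / b := by
    rw [hy]; push_cast; field_simp; ring
  rw [e1] at hB
  have e2 : (1 + (y - 1)) ^ (k + 1) = (s + b) ^ (k + 1) * k ^ k * k / ((k + 1) ^ (k + 1) * b ^ (k + 1)) := by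
    rw [add_sub_cancel, hy, div_pow, mul_pow, mul_pow]
    ring
  rw [e2, div_le_div_iff₀ hb (by positivity)] at hB
  have : (k * b) * (s * b ^ k * (k + 1) ^ (k + 1)) ≤ (k * b) * ((s + b) ^ (k + 1) * k ^ k) := by
    calc _ = k * s * ((k + 1) ^ (k + 1) * b ^ (k + 1)) := by ring
      _ ≤ _ := hB
      _ = _ := by ring
  exact le_of_mul_le_mul_left this (by positivity)

/-- the universal digraph -/
def univD (m k : ℕ) (p q : Fin (m + 1) × (Fin k → Fin m)) : Prop :=
  ∃ i, p.1.succAbove (p.2 i) = q.1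

lemma univD_indep (m k : ℕ) (A : Finset (Fin (m + 1) × (Fin k → Fin m)))
    (hA : ∀ p ∈ A, ∀ q ∈ A, ¬ univD m k p q) :
    ∃ s : ℕ, s ≤ m + 1 ∧ A.card ≤ s * (m + 1 - s) ^ k := by
  set X := A.image Prod.fst with hX
  refine ⟨X.card, by simpa using X.card_le_univ, ?_⟩
  have : A.card ≤ (X ×ˢ Fintype.piFinset (fun _ : Fin k => Xᶜ)).card := by
    refine Finset.card_le_card_of_injOn (fun p => (p.1, fun i => p.1.succAbove (p.2 i))) ?_ ?_
    · intro p hp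
      simp only [coe_product, Set.mem_prod, mem_coe, Fintype.mem_piFinset, mem_compl]
      refine ⟨mem_image_of_mem _ hp, fun i hi => ?_⟩
      obtain ⟨q, hq, h⟩ := mem_image.1 hi
      exact hA p hp q hq ⟨i, h.symm⟩
    · rintro ⟨x, a⟩ - ⟨y, b⟩ - h
      simp only [Prod.mk.injEq] at h
      obtain ⟨rfl, h⟩ := h
      congr 1
      ext1 i
      exact Fin.succAbove_right_injective (congrFun h i)
  refine this.trans ?_
  simp [Finset.card_product, Fintype.card_piFinset, Finset.card_compl]

lemma lower_graph (m k : ℕ) (hm : 1 ≤ m) (hk : 1 ≤ k) :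
    ∃ (n : ℕ) (D : Fin n → Fin n → Prop), (∀ v, ¬ D v v) ∧ (∃ u v, D u v) ∧
      fracDirLocal D ≤ k + 1 ∧
      (1 + 1 / (k:ℝ)) ^ k * (k + 1) * ((m : ℝ) / (m + 1)) ^ k ≤ fracChrom (underlying D) := by
  let V := Fin (m + 1) × (Fin k → Fin m)
  let e : Fin (Fintype.card V) ≃ V := (Fintype.equivFin V).symm
  have hk0 : (0:ℝ) < k := by exact_mod_cast hk
  have hm0 : (0:ℝ) < m := by exact_mod_cast hm
  let D : Fin (Fintype.card V) → Fin (Fintype.card V) → Prop := fun u v => univD m k (e u) (e v)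
  have hloop : ∀ v, ¬ D v v := by
    rintro v ⟨i, hi⟩
    exact Fin.succAbove_ne _ _ hi
  refine ⟨_, D, hloop, ?_, ?_, ?_⟩
  · let a : Fin k → Fin m := fun _ => ⟨0, hm⟩
    refine ⟨e.symm (0, a), e.symm ((0 : Fin (m+1)).succAbove ⟨0, hm⟩, a), ?_⟩
    simp only [D, Equiv.apply_symm_apply]
    exact ⟨⟨0, hk⟩, rfl⟩
  · have hc : ∀ u v, (underlying D).Adj u v → (e u).1 ≠ (e v).1 := by
      intro u v huv h
      simp only [underlying, SimpleGraph.fromRel_adj] at huv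
      rcases huv.2 with ⟨i, hi⟩ | ⟨i, hi⟩
      · exact Fin.succAbove_ne _ _ (hi.trans h.symm)
      · exact Fin.succAbove_ne _ _ (hi.trans h)
    refine (fdl_le D (colF _ (fun v => (e v).1) hc)).trans ?_
    rw [localWeight, add_comm]
    gcongr
    have : Nonempty (Fin (Fintype.card V)) :=
      ⟨e.symm (0, fun _ => ⟨0, hm⟩)⟩
    refine ciSup_le fun v => ?_
    rw [colF_local]
    have : (univ.filter fun x => ∃ u, (e u).1 = x ∧ D v u) ⊆
        univ.image (fun i => (e v).1.succAbove ((e v).2 i)) := by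
      intro x hx
      obtain ⟨-, u, rfl, i, hi⟩ := mem_filter.1 hx
      exact mem_image.2 ⟨i, mem_univ _, hi⟩
    have h2 := (card_le_card this).trans card_image_le
    rw [Finset.card_univ, Fintype.card_fin] at h2
    refine le_trans (le_of_eq ?_) (Nat.cast_le (α := ℝ).2 h2)
    congr!
  · refine le_csInf ⟨_, trivF _, rfl⟩ ?_
    rintro w ⟨f, rfl⟩
    have key := fc_lower (underlying D) ((m + 1) ^ (k + 1) * k ^ k / (k + 1) ^ (k + 1)) ?_ f
    · have hcard : (Fintype.card (Fin (Fintype.card V)) : ℝ) = (m + 1) * m ^ k := by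
        simp [V]
      rw [hcard, div_mul_eq_mul_div, le_div_iff₀ (by positivity)] at key
      have : (1 + 1 / (k:ℝ)) ^ k * (k + 1) * ((m : ℝ) / (m + 1)) ^ k
          = ((m + 1) * m ^ k * (k + 1) ^ (k + 1)) / ((m + 1) ^ (k + 1) * k ^ k) := by
        have : 1 + 1 / (k:ℝ) = (k + 1) / k := by field_simp
        rw [this, div_pow, div_pow]
        field_simp
        ring
      rw [this, div_le_iff₀ (by positivity)]
      linarith
    · intro A hA
      obtain ⟨s, hs, hc⟩ := univD_indep m k (A.map e.toEmbedding) (by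
        intro p hp q hq hpq
        obtain ⟨u, hu, rfl⟩ := mem_map.1 hp
        obtain ⟨v, hv, rfl⟩ := mem_map.1 hq
        have hd : D u v := hpq
        refine hA u hu v hv ?_
        simp only [underlying, SimpleGraph.fromRel_adj]
        refine ⟨?_, Or.inl hd⟩
        rintro rfl
        exact hloop _ hd)
      rw [card_map] at hc
      have hc' : (A.card : ℝ) ≤ s * ((m + 1 : ℝ) - s) ^ k := by
        have : ((m + 1 - s : ℕ) : ℝ) = (m + 1 : ℝ) - s := by
          rw [Nat.cast_sub hs]; push_cast; ring
        rw [← this]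
        exact_mod_cast hc
      rw [le_div_iff₀ (by positivity)]
      have hs' : (s:ℝ) ≤ m + 1 := by exact_mod_cast hs
      have := amgm k hk s ((m + 1 : ℝ) - s) (by positivity) (by linarith)
      rw [add_sub_cancel] at this
      refine le_trans ?_ this
      gcongr

/-- probability weight of the random subset -/
noncomputable def wt {ι : Type*} [Fintype ι] (q : ι → ℝ) (C : Finset ι) : ℝ :=
  (∏ i ∈ C, (1 - q i)) * ∏ i ∈ univ \ C, q i

lemma wt_disj {ι : Type*} [Fintype ι] (q : ι → ℝ) (F : Finset ι) :
    (∑ C : Finset ι, if Disjoint C F then wt q C else 0) = ∏ i ∈ F, q i := by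
  have h := Finset.prod_add (fun i => if i ∈ F then 0 else 1 - q i) q univ
  have h2 : ∏ i, ((if i ∈ F then 0 else 1 - q i) + q i) = ∏ i ∈ F, q i := by
    rw [← Finset.prod_subset (subset_univ F)]
    · exact Finset.prod_congr rfl fun i hi => by simp [hi]
    · intro i _ hi; simp [hi]
  rw [← h2, h, Finset.powerset_univ]
  refine Finset.sum_congr rfl fun C _ => ?_
  by_cases hd : Disjoint C F
  · rw [if_pos hd, wt]
    congr 1
    exact Finset.prod_congr rfl fun i hi => by simp [Finset.disjoint_left.1 hd hi]
  · rw [if_neg hd]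
    obtain ⟨i, hi, hF⟩ := Finset.not_disjoint_iff.1 hd
    rw [Finset.prod_eq_zero hi (by simp [hF]), zero_mul]

lemma wt_event {ι : Type*} [Fintype ι] (q : ι → ℝ) (E F : Finset ι) (hEF : Disjoint E F) :
    (∑ C : Finset ι, if ¬ Disjoint C E ∧ Disjoint C F then wt q C else 0)
      = (∏ i ∈ F, q i) * (1 - ∏ i ∈ E, q i) := by
  have h1 := wt_disj q F
  have h2 := wt_disj q (E ∪ F)
  rw [Finset.prod_union hEF] at h2
  have : (∑ C : Finset ι, if ¬ Disjoint C E ∧ Disjoint C F then wt q C else 0)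
     = (∑ C : Finset ι, if Disjoint C F then wt q C else 0)
      - ∑ C : Finset ι, if Disjoint C (E ∪ F) then wt q C else 0 := by
    rw [← Finset.sum_sub_distrib]
    refine Finset.sum_congr rfl fun C _ => ?_
    have hu : Disjoint C (E ∪ F) ↔ Disjoint C E ∧ Disjoint C F :=
      Finset.disjoint_union_right
    by_cases a : Disjoint C E <;> by_cases b : Disjoint C F <;> simp [a, b]
  rw [this, h1, h2]
  ring

/-- the independent set selected by a family of colors -/
noncomputable def selI {V : Type*} [Fintype V] (D : V → V → Prop) (C : Finset (Finset V)) :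
    Finset V :=
  univ.filter fun v => (∃ A ∈ C, IsIndepF (underlying D) A ∧ v ∈ A) ∧
    ∀ A ∈ C, ¬ ∃ u ∈ A, D v u

lemma selI_indep {V : Type*} [Fintype V] (D : V → V → Prop) (C : Finset (Finset V)) :
    IsIndepF (underlying D) (selI D C) := by
  intro u hu v hv huv
  simp only [selI, mem_filter, mem_univ, true_and] at hu hv
  simp only [underlying, SimpleGraph.fromRel_adj] at huv
  rcases huv.2 with h | h
  · obtain ⟨A, hA, -, hvA⟩ := hv.1
    exact hu.2 A hA ⟨v, hvA, h⟩
  · obtain ⟨A, hA, -, hvA⟩ := hu.1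
    exact hv.2 A hA ⟨u, hvA, h⟩

lemma upper_aux {V : Type*} [Fintype V] (D : V → V → Prop) (hD : ∀ v, ¬ D v v)
    (f : FracColoring (underlying D)) (t : ℝ) (ht0 : 0 < t) (ht1 : t < 1) :
    fracChrom (underlying D) ≤ 1 / ((1 - t) * t ^ (localWeight D f - 1)) := by
  set K : ℝ := 1 / ((1 - t) * t ^ (localWeight D f - 1)) with hK
  have ht2 : 0 < 1 - t := by linarith
  have hpos : 0 < (1 - t) * t ^ (localWeight D f - 1) :=
    mul_pos ht2 (Real.rpow_pos_of_pos ht0 _)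
  have hK0 : 0 < K := by positivity
  let q : Finset V → ℝ := fun A => t ^ f.x A
  have hq0 : ∀ A, 0 ≤ q A := fun A => (Real.rpow_pos_of_pos ht0 _).le
  have hq1 : ∀ A, q A ≤ 1 := fun A => Real.rpow_le_one ht0.le ht1.le (f.nonneg A)
  have hw : ∀ C, 0 ≤ wt q C := fun C =>
    mul_nonneg (Finset.prod_nonneg fun i _ => by linarith [hq1 i])
      (Finset.prod_nonneg fun i _ => hq0 i)
  have hprod : ∀ F : Finset (Finset V), ∏ A ∈ F, q A = t ^ (∑ A ∈ F, f.x A) := by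
    intro F
    rw [Real.rpow_sum_of_pos ht0]
  have hpr : ∀ v : V, (1 - t) * t ^ (localWeight D f - 1) ≤
      ∑ C : Finset (Finset V), if v ∈ selI D C then wt q C else 0 := by
    intro v
    let E : Finset (Finset V) := univ.filter fun A => IsIndepF (underlying D) A ∧ v ∈ A
    let F : Finset (Finset V) := univ.filter fun A => ∃ u ∈ A, D v u
    have hEF : Disjoint E F := by
      rw [Finset.disjoint_left]
      intro A hE hF
      simp only [E, F, mem_filter, mem_univ, true_and] at hE hF
      obtain ⟨u, hu, hvu⟩ := hF
      refine hE.1 v hE.2 u hu ?_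
      simp only [underlying, SimpleGraph.fromRel_adj]
      refine ⟨?_, Or.inl hvu⟩
      rintro rfl
      exact hD _ hvu
    have hev := wt_event q E F hEF
    have hiff : ∀ C, v ∈ selI D C ↔ (¬ Disjoint C E ∧ Disjoint C F) := by
      intro C
      rw [Finset.not_disjoint_iff]
      simp only [selI, mem_filter, mem_univ, true_and, E, F, Finset.disjoint_left]
    have hrw : (∑ C : Finset (Finset V), if v ∈ selI D C then wt q C else 0)
        = (∏ i ∈ F, q i) * (1 - ∏ i ∈ E, q i) := by
      rw [← hev]
      refine Finset.sum_congr rfl fun C _ => ?_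
      by_cases hC : v ∈ selI D C
      · rw [if_pos hC, if_pos ((hiff C).1 hC)]
      · rw [if_neg hC, if_neg (fun h => hC ((hiff C).2 h))]
    rw [hrw, hprod, hprod, mul_comm]
    have hFs : ∑ A ∈ F, f.x A ≤ localWeight D f - 1 := by
      have := local_le D f v
      rwa [← Finset.sum_filter] at this
    have hEs : 1 ≤ ∑ A ∈ E, f.x A := by
      have h := f.cover v
      have : (∑ A : Finset V, if v ∈ A then f.x A else 0) = ∑ A ∈ E, f.x A := by
        rw [Finset.sum_filter]
        refine Finset.sum_congr rfl fun A _ => ?_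
        by_cases h0 : f.x A = 0
        · simp [h0]
        · simp [f.supp A h0]
      rwa [this] at h
    have a1 : t ^ (localWeight D f - 1) ≤ t ^ (∑ A ∈ F, f.x A) :=
      Real.rpow_le_rpow_of_exponent_ge ht0 ht1.le hFs
    have a2 : t ^ (∑ A ∈ E, f.x A) ≤ t := by
      simpa using Real.rpow_le_rpow_of_exponent_ge ht0 ht1.le hEs
    exact mul_le_mul a1 (by linarith) ht2.le (Real.rpow_pos_of_pos ht0 _).le
  let g : FracColoring (underlying D) :=
    { x := fun I => K * ∑ C : Finset (Finset V), if selI D C = I then wt q C else 0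
      nonneg := fun I => mul_nonneg hK0.le (Finset.sum_nonneg fun C _ => by
        split_ifs
        · exact hw C
        · exact le_rfl)
      supp := by
        intro I hI
        obtain ⟨C, -, hC⟩ := Finset.exists_ne_zero_of_sum_ne_zero (right_ne_zero_of_mul hI)
        have : selI D C = I := by
          by_contra h
          simp [h] at hC
        rw [← this]
        exact selI_indep D C
      cover := by
        intro v
        have : (∑ I : Finset V, if v ∈ I then
            (K * ∑ C : Finset (Finset V), if selI D C = I then wt q C else 0) else 0)
            = K * ∑ C : Finset (Finset V), if v ∈ selI D C then wt q C else 0 := by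
          have h1 : ∀ I : Finset V, (if v ∈ I then
            (K * ∑ C : Finset (Finset V), if selI D C = I then wt q C else 0) else 0)
             = K * ∑ C : Finset (Finset V), if selI D C = I then
                (if v ∈ selI D C then wt q C else 0) else 0 := by
            intro I
            by_cases hv : v ∈ I
            · rw [if_pos hv]
              congr 1
              refine Finset.sum_congr rfl fun C _ => ?_
              by_cases hC : selI D C = I
              · simp [hC, hv]
              · simp [hC]
            · rw [if_neg hv]
              symm
              rw [mul_eq_zero]
              right
              refine Finset.sum_eq_zero fun C _ => ?_
              by_cases hC : selI D C = I
              · simp [hC, hv]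
              · simp [hC]
          simp only [h1]
          rw [← Finset.mul_sum, Finset.sum_comm]
          simp
        rw [this]
        calc (1:ℝ) = K * ((1 - t) * t ^ (localWeight D f - 1)) := by
              rw [hK]; field_simp
          _ ≤ _ := mul_le_mul_of_nonneg_left (hpr v) hK0.le }
  have hg : totalWeight g = K := by
    simp only [totalWeight, g]
    rw [← Finset.mul_sum, Finset.sum_comm]
    have := wt_disj q ∅
    simp only [Finset.disjoint_empty_right, if_true, Finset.prod_empty] at this
    simp [this]
  rw [← hg]
  exact fc_le _ g

lemma upper_main {V : Type*} [Fintype V] (D : V → V → Prop) (hD : ∀ v, ¬ D v v)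
    (hA : ∃ u v, D u v) : fracChrom (underlying D) < Real.exp 1 * fracDirLocal D := by
  set M := fracDirLocal D with hM
  have hM2 : 2 ≤ M := by
    refine le_csInf ⟨_, trivF _, rfl⟩ ?_
    rintro w ⟨f, rfl⟩
    obtain ⟨u, v, huv⟩ := hA
    have h1 := local_le D f u
    have h2 := f.cover v
    have h3 : (∑ A : Finset V, if v ∈ A then f.x A else 0) ≤
        ∑ A : Finset V, if ∃ z ∈ A, D u z then f.x A else 0 := by
      refine Finset.sum_le_sum fun A _ => ?_
      by_cases hv : v ∈ A
      · rw [if_pos hv, if_pos ⟨v, hv, huv⟩]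
      · rw [if_neg hv]
        split_ifs
        · exact f.nonneg A
        · exact le_rfl
    linarith
  set t : ℝ := (M - 1) / M with ht
  have ht0 : 0 < t := div_pos (by linarith) (by linarith)
  have ht1 : t < 1 := by rw [ht, div_lt_one (by linarith)]; linarith
  have hbd : fracChrom (underlying D) ≤ 1 / ((1 - t) * t ^ (M - 1)) := by
    have hcont : Continuous fun w : ℝ => 1 / ((1 - t) * t ^ (w - 1)) := by
      refine Continuous.div continuous_const ?_ ?_
      · exact continuous_const.mul
          (Real.continuous_const_rpow ht0.ne' |>.comp (continuous_id.sub continuous_const))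
      · intro w
        exact (mul_pos (by linarith) (Real.rpow_pos_of_pos ht0 _)).ne'
    have hcl : IsClosed {w : ℝ | fracChrom (underlying D) ≤ 1 / ((1 - t) * t ^ (w - 1))} :=
      isClosed_le continuous_const hcont
    have hmem : M ∈ closure {w : ℝ | ∃ f : FracColoring (underlying D), w = localWeight D f} := by
      refine csInf_mem_closure ⟨_, trivF _, rfl⟩ ⟨1, ?_⟩
      rintro w ⟨f, rfl⟩
      exact one_le_local D f
    refine (closure_minimal ?_ hcl) hmem
    rintro w ⟨f, rfl⟩
    exact upper_aux D hD f t ht0 ht1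
  refine hbd.trans_lt ?_
  have h1t : 1 - t = 1 / M := by
    rw [ht]; field_simp; ring
  have hlog : Real.log t⁻¹ < 1 / (M - 1) := by
    have hne : t⁻¹ ≠ 1 := by
      intro h
      rw [inv_eq_one] at h
      linarith
    have := Real.log_lt_sub_one_of_pos (inv_pos.2 ht0) hne
    have h2 : t⁻¹ - 1 = 1 / (M - 1) := by
      have : M - 1 ≠ 0 := by linarith
      rw [ht]; field_simp; ring
    linarith
  have hpow : (t ^ (M - 1))⁻¹ < Real.exp 1 := by
    rw [← Real.inv_rpow ht0.le, Real.rpow_def_of_pos (inv_pos.2 ht0), Real.exp_lt_exp]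
    have : 0 < M - 1 := by linarith
    calc Real.log t⁻¹ * (M - 1) < 1 / (M - 1) * (M - 1) := by gcongr
      _ = 1 := by field_simp
  have : 1 / ((1 - t) * t ^ (M - 1)) = (t ^ (M - 1))⁻¹ * M := by
    rw [h1t]
    have : M ≠ 0 := by linarith
    field_simp
  rw [this]
  gcongr

lemma lower_main (ε : ℝ) (hε : 0 < ε) : ∃ (n : ℕ) (D : Fin n → Fin n → Prop),
      (∀ v, ¬ D v v) ∧ (∃ u v, D u v) ∧
      (Real.exp 1 - ε) * fracDirLocal D < fracChrom (underlying D) := by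
  have h1 := Real.tendsto_one_add_div_pow_exp 1
  obtain ⟨k, hk, hk1⟩ := ((h1.eventually (lt_mem_nhds (show Real.exp 1 - ε < Real.exp 1 by
    linarith))).and (Filter.eventually_ge_atTop 1)).exists
  have hk0 : (0:ℝ) < k := by exact_mod_cast hk1
  have h2 : Filter.Tendsto (fun m : ℕ => (1 + 1 / (k:ℝ)) ^ k * ((m : ℝ) / (m + 1)) ^ k)
      Filter.atTop (nhds ((1 + 1 / (k:ℝ)) ^ k)) := by
    have := ((tendsto_natCast_div_add_atTop (1:ℝ)).pow k).const_mul ((1 + 1 / (k:ℝ)) ^ k)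
    simpa using this
  obtain ⟨m, hm, hm1⟩ := ((h2.eventually (lt_mem_nhds hk)).and
    (Filter.eventually_ge_atTop 1)).exists
  have hm0 : (0:ℝ) < m := by exact_mod_cast hm1
  obtain ⟨n, D, hl, ha, hu, hc⟩ := lower_graph m k hm1 hk1
  refine ⟨n, D, hl, ha, ?_⟩
  have hpos := one_le_fdl D
  calc (Real.exp 1 - ε) * fracDirLocal D
      < (1 + 1 / (k:ℝ)) ^ k * ((m : ℝ) / (m + 1)) ^ k * fracDirLocal D := by gcongr
    _ ≤ (1 + 1 / (k:ℝ)) ^ k * ((m : ℝ) / (m + 1)) ^ k * (k + 1) := by gcongr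
    _ = (1 + 1 / (k:ℝ)) ^ k * (k + 1) * ((m : ℝ) / (m + 1)) ^ k := by ring
    _ ≤ _ := hc

end Helpers

/-- The supremum of `χ*(D)/ψ_d*(D)` over finite loopless digraphs `D` with at least one arc
equals `e`: every such digraph satisfies `χ*(D) < e·ψ_d*(D)`, and for each `ε > 0` some such
digraph satisfies `χ*(D) > (e-ε)·ψ_d*(D)`. -/
theorem stmt9 :
    (∀ (n : ℕ) (D : Fin n → Fin n → Prop), (∀ v, ¬ D v v) → (∃ u v, D u v) →
      fracChrom (underlying D) < Real.exp 1 * fracDirLocal D) ∧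
    (∀ ε : ℝ, 0 < ε → ∃ (n : ℕ) (D : Fin n → Fin n → Prop),
      (∀ v, ¬ D v v) ∧ (∃ u v, D u v) ∧
      (Real.exp 1 - ε) * fracDirLocal D < fracChrom (underlying D)) := by
  exact ⟨fun n D hD hA => upper_main D hD hA, lower_main⟩
end
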